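/- For all integers d ≥ 2 and g ≥ 3, there exists a finite simple d-regular graph G with girth at least g having at most 4·∑_{i=0}^{g-2}(d-1)^i vertices. -/

import Mathlib

/-!
The proof is extremal. Write `S = ∑_{i ≤ g-2} (d-1)^i`. Among all graphs on `4 * S` vertices with
maximum degree at most `d` and girth at least `g`, take one, `G`, with the largest degree sum, and
suppose it is not `d`-regular. As `4 * S * d` is even, so is the total deficit `∑ (d - deg v)`;
hence there are vertices `x`, `y`, each of degree less than `d`, possibly equal but then of degree
at most `d - 2`. The balls of radius `g - 2` around `x` and `y` have at most `S` vertices each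
(`card_ball_le`), so at least half of the vertices, forming a set `W`, lie outside their union `B`.

* A vertex `w ∈ W` of degree less than `d` could be joined to `x`, as `x` and `w` are at distance
  at least `g - 1`. So all vertices of `W` have degree `d`.
* If `W` were independent, then all of its `d * |W|` edges would end in `B`, which can absorb fewer
  than `d * |B| ≤ d * |W|` of them, since `x ∈ B` has degree less than `d`.
* So there is an edge `u v` inside `W`. Replacing it by the two edges `x u` and `y v` keeps the
  girth at least `g`, keeps all degrees at most `d`, and increases the degree sum
  (`exists_switch`), contradicting the choice of `G`.

The resulting graph has exactly `4 * S` vertices (`exists_regular_card_eq`); in particular it is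
not the graph on the empty vertex set, which would satisfy the final statement vacuously.
-/

namespace ErdosSachs

open Finset SimpleGraph

variable {V : Type*}

/-! ### Girth and walks -/

/-- All walks from `a` to `b` have length at least `g - 1`, i.e. the two vertices are at distance at
least `g - 1` (or in different components), so that joining `a` to `b` creates no cycle shorter than `g`. -/
def Far (g : ℕ) (G : SimpleGraph V) (a b : V) : Prop :=
  ∀ w : G.Walk a b, g ≤ w.length + 1

/-- A form of "girth at least `g`" that is convenient under insertion and deletion of edges: the
endpoints of an edge are far apart once the edge is removed. -/
def LargeGirth (g : ℕ) (G : SimpleGraph V) : Prop :=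
  ∀ a b, G.Adj a b → Far g (G.deleteEdges {s(a, b)}) a b

theorem Far.symm {g : ℕ} {G : SimpleGraph V} {a b : V} (h : Far g G a b) : Far g G b a := by
  intro w
  simpa using h w.reverse

theorem Far.mono {g : ℕ} {G H : SimpleGraph V} {a b : V} (hle : H ≤ G) (h : Far g G a b) :
    Far g H a b := by
  intro w
  simpa using h (w.mapLe hle)

theorem LargeGirth.mono {g : ℕ} {G H : SimpleGraph V} (hle : H ≤ G) (h : LargeGirth g G) :
    LargeGirth g H := fun a b hab =>
  (h a b (hle hab)).mono (deleteEdges_mono hle)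

theorem LargeGirth.le_egirth {g : ℕ} {G : SimpleGraph V} (h : LargeGirth g G) :
    (g : ℕ∞) ≤ G.egirth := by
  rw [SimpleGraph.le_egirth]
  intro a w hw
  cases w with
  | nil => simp at hw
  | cons hab p =>
    rw [Walk.cons_isCycle_iff] at hw
    have hp := (h _ _ hab).symm (p.toDeleteEdges {s(_, _)} (by
      intro e he hes
      rw [Set.mem_singleton_iff] at hes
      exact hw.2 (hes ▸ he)))
    simp only [Walk.toDeleteEdges, Walk.length_transfer] at hp
    simpa using (Nat.cast_le (α := ℕ∞)).2 hp

/-- A walk after adding the edge `a b` either shortens to a walk of the old graph, or yields two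
walks of the old graph which lead from its ends to the two ends of the new edge. -/
theorem walk_sup_edge {G : SimpleGraph V} {a b c e : V} (w : (G ⊔ edge a b).Walk c e) :
    (∃ p : G.Walk c e, p.length ≤ w.length) ∨
    (∃ (p : G.Walk c a) (q : G.Walk b e), p.length + q.length + 1 ≤ w.length) ∨
    (∃ (p : G.Walk c b) (q : G.Walk a e), p.length + q.length + 1 ≤ w.length) := by
  induction w with
  | nil => exact Or.inl ⟨Walk.nil, by simp⟩
  | cons h w ih =>
    rw [Walk.length_cons]
    rw [sup_adj, edge_adj] at h
    rcases h with h | ⟨⟨rfl, rfl⟩ | ⟨rfl, rfl⟩, -⟩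
    · rcases ih with ⟨p, hp⟩ | ⟨p, q, hp⟩ | ⟨p, q, hp⟩
      · exact Or.inl ⟨Walk.cons h p, by simpa using hp⟩
      · exact Or.inr (Or.inl ⟨Walk.cons h p, q, by rw [Walk.length_cons]; omega⟩)
      · exact Or.inr (Or.inr ⟨Walk.cons h p, q, by rw [Walk.length_cons]; omega⟩)
    · rcases ih with ⟨p, hp⟩ | ⟨p, q, hp⟩ | ⟨p, q, hp⟩
      · exact Or.inr (Or.inl ⟨Walk.nil, p, by rw [Walk.length_nil]; omega⟩)
      · exact Or.inr (Or.inl ⟨Walk.nil, q, by rw [Walk.length_nil]; omega⟩)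
      · exact Or.inl ⟨q, by omega⟩
    · rcases ih with ⟨p, hp⟩ | ⟨p, q, hp⟩ | ⟨p, q, hp⟩
      · exact Or.inr (Or.inr ⟨Walk.nil, p, by rw [Walk.length_nil]; omega⟩)
      · exact Or.inl ⟨q, by omega⟩
      · exact Or.inr (Or.inr ⟨Walk.nil, q, by rw [Walk.length_nil]; omega⟩)

theorem LargeGirth.sup_edge {g : ℕ} {G : SimpleGraph V} {a b : V} (h : LargeGirth g G)
    (hab : Far g G a b) : LargeGirth g (G ⊔ edge a b) := by
  intro c e hce
  by_cases hG : G.Adj c e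
  · have hle : (G ⊔ edge a b).deleteEdges {s(c, e)} ≤ G.deleteEdges {s(c, e)} ⊔ edge a b := by
      intro p q
      simp only [deleteEdges_adj, sup_adj]
      tauto
    have hdel : G.deleteEdges {s(c, e)} ≤ G := deleteEdges_le _
    refine Far.mono hle fun w => ?_
    rcases walk_sup_edge w with ⟨p, hp⟩ | ⟨p, q, hp⟩ | ⟨p, q, hp⟩
    · have := h c e hG p
      omega
    -- If the new edge is used, going the other way round through `c e` joins `a` to `b` in `G`.
    · have := hab ((p.mapLe hdel).reverse.append (Walk.cons hG (q.mapLe hdel).reverse))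
      simp at this
      omega
    · have := hab ((q.mapLe hdel).append (Walk.cons hG.symm (p.mapLe hdel)))
      simp at this
      omega
  · rw [sup_adj, edge_adj] at hce
    have hle : (G ⊔ edge a b).deleteEdges {s(a, b)} ≤ G := by
      intro p q
      simp only [deleteEdges_adj, sup_adj, edge_adj, Set.mem_singleton_iff, Sym2.eq_iff]
      tauto
    rcases hce with hce | ⟨⟨rfl, rfl⟩ | ⟨rfl, rfl⟩, -⟩
    · exact absurd hce hG
    · exact hab.mono hle
    · rw [Sym2.eq_swap]
      exact (hab.mono hle).symm

/-! ### Degrees -/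

section Degrees

variable [Fintype V]

open Classical in
/-- The neighbourhood of `v` as a finset, with a decidability instance not depending on `G`. -/
noncomputable def nbr (G : SimpleGraph V) (v : V) : Finset V := {w | G.Adj v w}

@[simp] theorem mem_nbr {G : SimpleGraph V} {v w : V} : w ∈ nbr G v ↔ G.Adj v w := by
  simp [nbr]

theorem degree_eq_card_nbr (G : SimpleGraph V) [DecidableRel G.Adj] (v : V) :
    G.degree v = #(nbr G v) := by
  rw [← card_neighborFinset_eq_degree]
  congr 1
  ext w
  simp

open Classical in
theorem card_nbr_sup_edge {G : SimpleGraph V} {a b : V} (hne : a ≠ b) (hab : ¬ G.Adj a b) (w : V) :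
    #(nbr (G ⊔ edge a b) w) =
      #(nbr G w) + (if w = a then 1 else 0) + (if w = b then 1 else 0) := by
  by_cases ha : w = a
  · subst ha
    have : nbr (G ⊔ edge w b) w = insert b (nbr G w) := by
      ext z
      simp only [mem_nbr, sup_adj, edge_adj, mem_insert]
      grind
    rw [this, card_insert_of_notMem (by simpa using hab)]
    simp [hne]
  · by_cases hb : w = b
    · subst hb
      have : nbr (G ⊔ edge a w) w = insert a (nbr G w) := by
        ext z
        simp only [mem_nbr, sup_adj, edge_adj, mem_insert]
        grind
      rw [this, card_insert_of_notMem (by simpa [adj_comm] using hab)]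
      simp [ha]
    · have : nbr (G ⊔ edge a b) w = nbr G w := by
        ext z
        simp only [mem_nbr, sup_adj, edge_adj]
        grind
      simp [this, ha, hb]

/-- The switch: if the edge `u v` is far from `x` and `y`, then trading it for the edges `x u` and
`y v` preserves large girth and raises exactly the degrees of `x` and `y` (twice if `x = y`). -/
theorem exists_switch {g : ℕ} (hg : 3 ≤ g) {G : SimpleGraph V} (h : LargeGirth g G) {x y u v : V}
    (huv : G.Adj u v) (hxu : Far g G x u) (hxv : Far g G x v) (hyu : Far g G y u)
    (hyv : Far g G y v) :
    ∃ H : SimpleGraph V, LargeGirth g H ∧ ∀ w, ∃ p q : ℕ, #(nbr H w) = #(nbr G w) + p + q ∧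
      (w = x → p = 1) ∧ (w ≠ x → p = 0) ∧ (w = y → q = 1) ∧ (w ≠ y → q = 0) := by
  classical
  have hne : ∀ {s t : V}, Far g G s t → s ≠ t := by
    rintro s t hst rfl
    have := hst Walk.nil
    simp at this
    omega
  have hnadj : ∀ {s t : V}, Far g G s t → ¬ G.Adj s t := by
    intro s t hst hadj
    have := hst (Walk.cons hadj Walk.nil)
    simp at this
    omega
  set G₁ := G.deleteEdges {s(u, v)} with hG₁
  have hle : G₁ ≤ G := deleteEdges_le _
  have hG : G = G₁ ⊔ edge u v := by
    ext p q
    simp only [hG₁, deleteEdges_adj, sup_adj, edge_adj, Set.mem_singleton_iff, Sym2.eq_iff]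
    constructor
    · intro hpq
      have := hpq.ne
      tauto
    · rintro (hpq | ⟨⟨rfl, rfl⟩ | ⟨rfl, rfl⟩, -⟩)
      exacts [hpq.1, huv, huv.symm]
  have hg₁ : LargeGirth g (G₁ ⊔ edge x u) := (h.mono hle).sup_edge (hxu.mono hle)
  -- A `y`-`v` walk through the new edge `x u` contains a walk from `u` to `v` avoiding the edge
  -- `u v`, or a walk from `y` to `u`.
  have hyv' : Far g (G₁ ⊔ edge x u) y v := by
    intro w
    rcases walk_sup_edge w with ⟨p, hp⟩ | ⟨p, q, hp⟩ | ⟨p, q, hp⟩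
    · have := hyv.mono hle p
      omega
    · have := h u v huv q
      omega
    · have := hyu.mono hle p
      omega
  refine ⟨G₁ ⊔ edge x u ⊔ edge y v, hg₁.sup_edge hyv', fun w =>
    ⟨if w = x then 1 else 0, if w = y then 1 else 0, ?_, by simp +contextual, by simp +contextual,
      by simp +contextual, by simp +contextual⟩⟩
  have h1 := card_nbr_sup_edge (G := G₁) huv.ne (by simp [hG₁]) w
  rw [← hG] at h1
  have h2 := card_nbr_sup_edge (G := G₁) (hne hxu) (fun hh => hnadj hxu (hle hh)) w
  have h3 := card_nbr_sup_edge (G := G₁ ⊔ edge x u) (hne hyv) (by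
    rw [sup_adj, edge_adj]
    rintro (hh | ⟨⟨-, rfl⟩ | ⟨-, rfl⟩, -⟩)
    · exact hnadj hyv (hle hh)
    · exact huv.ne rfl
    · exact hne hxv rfl) w
  omega

/-! ### Balls -/

open Classical in
/-- The closed ball of radius `n` around `x` in the graph metric. -/
noncomputable def ball (G : SimpleGraph V) (x : V) : ℕ → Finset V
  | 0 => {x}
  | n + 1 => ball G x n ∪ (ball G x n).biUnion (nbr G)

theorem mem_ball_succ {G : SimpleGraph V} {x v : V} {n : ℕ} :
    v ∈ ball G x (n + 1) ↔ v ∈ ball G x n ∨ ∃ u ∈ ball G x n, G.Adj u v := by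
  simp [ball]

theorem self_mem_ball (G : SimpleGraph V) (x : V) (n : ℕ) : x ∈ ball G x n := by
  induction n with
  | zero => simp [ball]
  | succ n ih => exact mem_ball_succ.2 (Or.inl ih)

theorem mem_ball_of_walk {G : SimpleGraph V} {x v : V} (w : G.Walk v x) {n : ℕ}
    (hn : w.length ≤ n) : v ∈ ball G x n := by
  induction w generalizing n with
  | nil => exact self_mem_ball ..
  | cons h w ih =>
    rw [Walk.length_cons] at hn
    obtain ⟨n, rfl⟩ : ∃ k, n = k + 1 := ⟨n - 1, by omega⟩
    exact mem_ball_succ.2 (Or.inr ⟨_, ih (by omega), h.symm⟩)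

theorem far_of_notMem_ball {g : ℕ} {G : SimpleGraph V} {x v : V} (h : v ∉ ball G x (g - 2)) :
    Far g G x v := by
  refine Far.symm fun w => ?_
  by_contra hw
  exact h (mem_ball_of_walk w (by omega))

open Classical in
/-- Each vertex of a sphere has a neighbour one step closer to the centre, so at most `d - 1` of its
neighbours lie further out; at the centre this is the degree hypothesis. -/
theorem card_sphere_le {G : SimpleGraph V} {d : ℕ} (hdeg : ∀ v, #(nbr G v) ≤ d) {x : V}
    (hx : #(nbr G x) ≤ d - 1) (n : ℕ) :
    #(ball G x (n + 1) \ ball G x n) ≤ (d - 1) ^ (n + 1) := by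
  induction n with
  | zero =>
    have hsub : ball G x 1 \ ball G x 0 ⊆ nbr G x := by
      intro v hv
      rw [mem_sdiff, mem_ball_succ] at hv
      simp only [ball, mem_singleton, exists_eq_left] at hv
      simp
      tauto
    simpa using (card_le_card hsub).trans hx
  | succ n ih =>
    have hsub : ball G x (n + 2) \ ball G x (n + 1) ⊆
        (ball G x (n + 1) \ ball G x n).biUnion fun u => nbr G u \ ball G x n := by
      intro v hv
      rw [mem_sdiff, mem_ball_succ] at hv
      obtain ⟨hv1 | ⟨u, hu, huv⟩, hv2⟩ := hv
      · exact absurd hv1 hv2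
      rw [mem_ball_succ] at hv2
      push Not at hv2
      rw [mem_biUnion]
      exact ⟨u, mem_sdiff.2 ⟨hu, fun hu' => hv2.2 u hu' huv⟩,
        mem_sdiff.2 ⟨mem_nbr.2 huv, hv2.1⟩⟩
    calc _ ≤ _ := card_le_card hsub
      _ ≤ #(ball G x (n + 1) \ ball G x n) * (d - 1) := by
        refine card_biUnion_le_card_mul _ _ _ fun u hu => ?_
        rw [mem_sdiff, mem_ball_succ] at hu
        obtain ⟨hu1 | ⟨z, hz, hzu⟩, hu2⟩ := hu
        · exact absurd hu1 hu2
        have hlt : #(nbr G u \ ball G x n) < #(nbr G u) := by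
          refine card_lt_card (Finset.ssubset_iff_subset_ne.2 ⟨sdiff_subset, fun heq => ?_⟩)
          have hmem : z ∈ nbr G u := mem_nbr.2 hzu.symm
          rw [← heq, mem_sdiff] at hmem
          exact hmem.2 hz
        have := hdeg u
        omega
      _ ≤ (d - 1) ^ (n + 1) * (d - 1) := Nat.mul_le_mul_right _ ih
      _ = _ := (pow_succ _ _).symm

theorem card_ball_le {G : SimpleGraph V} {d : ℕ} (hdeg : ∀ v, #(nbr G v) ≤ d) {x : V}
    (hx : #(nbr G x) ≤ d - 1) (n : ℕ) :
    #(ball G x n) ≤ ∑ i ∈ range (n + 1), (d - 1) ^ i := by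
  classical
  induction n with
  | zero => simp [ball]
  | succ n ih =>
    rw [sum_range_succ]
    have h1 := card_sphere_le hdeg hx n
    have hsub : ball G x n ⊆ ball G x (n + 1) := fun v hv => mem_ball_succ.2 (Or.inl hv)
    have h2 := card_sdiff_add_card_eq_card hsub
    omega

/-! ### The extremal graph -/

open Classical in
/-- Fewer than `d * |B|` edges can end in `B` if some vertex of `B` has degree less than `d`, so a
set of vertices of degree `d` that is at least as large as its complement `B` spans an edge. -/
theorem exists_adj_of_card_le {G : SimpleGraph V} {d : ℕ} (hdeg : ∀ v, #(nbr G v) ≤ d)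
    {B : Finset V} {x : V} (hxB : x ∈ B) (hx : #(nbr G x) < d) (hB : #B ≤ #Bᶜ)
    (hW : ∀ w ∉ B, #(nbr G w) = d) : ∃ u v, u ∉ B ∧ v ∉ B ∧ G.Adj u v := by
  by_contra! hno
  have hsub : ∀ w ∈ Bᶜ, #(nbr G w) = #{b ∈ B | G.Adj w b} := by
    intro w hw
    congr 1
    ext b
    rw [mem_nbr, mem_filter]
    exact ⟨fun h => ⟨by_contra fun hb => hno w b (by simpa using hw) hb h, h⟩, fun h => h.2⟩
  have h1 : #Bᶜ * d = ∑ w ∈ Bᶜ, #{b ∈ B | G.Adj w b} := by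
    rw [← sum_congr rfl hsub, sum_congr rfl (fun w hw => hW w (by simpa using hw))]
    simp
  have h2 : ∑ w ∈ Bᶜ, #{b ∈ B | G.Adj w b} = ∑ b ∈ B, #{w ∈ Bᶜ | G.Adj w b} :=
    sum_card_bipartiteAbove_eq_sum_card_bipartiteBelow _
  have h3 : ∑ b ∈ B, #{w ∈ Bᶜ | G.Adj w b} ≤ ∑ b ∈ B, #(nbr G b) :=
    sum_le_sum fun b _ => card_le_card fun w hw => mem_nbr.2 (mem_filter.1 hw).2.symm
  have h4 : ∑ b ∈ B, #(nbr G b) < ∑ _b ∈ B, d :=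
    sum_lt_sum (fun b _ => hdeg b) ⟨x, hxB, hx⟩
  rw [sum_const, smul_eq_mul] at h4
  have h5 := Nat.mul_le_mul_right d hB
  omega

/-- Parity of the degree sum: on an even number of vertices, a graph of maximum degree at most `d`
that is not `d`-regular has two vertices of degree less than `d`, or one of degree at most
`d - 2`. -/
theorem exists_deficient_pair {G : SimpleGraph V} {d : ℕ} (hdeg : ∀ v, #(nbr G v) ≤ d)
    (heven : Even (Fintype.card V)) {x : V} (hx : #(nbr G x) < d) :
    ∃ y, #(nbr G y) < d ∧ (y = x → #(nbr G x) + 2 ≤ d) := by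
  classical
  by_contra! hno
  have hx1 : #(nbr G x) + 1 = d := by
    have := hno x hx
    simp at this
    omega
  have hother : ∀ y ≠ x, #(nbr G y) = d := by
    intro y hy
    by_contra hne
    exact hy (hno y (lt_of_le_of_ne (hdeg y) hne)).1
  have hsum : ∑ v, #(nbr G v) + 1 = Fintype.card V * d := by
    rw [← add_sum_erase univ _ (mem_univ x),
      sum_congr rfl (fun y hy => hother y (ne_of_mem_erase hy)), sum_const, card_erase_of_mem (mem_univ x), card_univ, smul_eq_mul]
    obtain ⟨m, hm⟩ : ∃ m, Fintype.card V = m + 1 :=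
      ⟨Fintype.card V - 1, by have := Fintype.card_pos_iff.2 ⟨x⟩; omega⟩
    rw [hm, Nat.add_sub_cancel, add_mul]
    omega
  have h2 := G.sum_degrees_eq_twice_card_edges
  simp only [degree_eq_card_nbr] at h2
  have h3 := heven.mul_right d
  rw [← hsum, h2] at h3
  obtain ⟨k, hk⟩ := h3
  omega

/-- The extremal argument: the required graph exists on every vertex set with exactly
`4 * ∑_{i ≤ g-2} (d-1)^i` elements. -/
theorem exists_regular_card_eq (d g : ℕ) (hg : 3 ≤ g)
    (hcard : Fintype.card V = 4 * ∑ i ∈ range (g - 1), (d - 1) ^ i) :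
    ∃ G : SimpleGraph V, (∀ v, #(nbr G v) = d) ∧ LargeGirth g G := by
  classical
  obtain ⟨G, ⟨hdeg, hgirth⟩, hmax⟩ := Set.exists_max_image
    {G : SimpleGraph V | (∀ v, #(nbr G v) ≤ d) ∧ LargeGirth g G} (fun G => ∑ v, #(nbr G v))
    (Set.toFinite _) ⟨⊥, by simp [nbr], fun a b h => by simp at h⟩
  refine ⟨G, ?_, hgirth⟩
  by_contra! hirr
  obtain ⟨x, hx⟩ := hirr
  replace hx := lt_of_le_of_ne (hdeg x) hx
  obtain ⟨y, hy, hxy⟩ := exists_deficient_pair hdeg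
    (hcard ▸ ⟨2 * ∑ i ∈ range (g - 1), (d - 1) ^ i, by ring⟩) hx
  have hBx := card_ball_le hdeg (x := x) (by omega) (g - 2)
  have hBy := card_ball_le hdeg (x := y) (by omega) (g - 2)
  rw [show g - 2 + 1 = g - 1 by omega] at hBx hBy
  set B := ball G x (g - 2) ∪ ball G y (g - 2) with hB
  have hxB : x ∈ B := mem_union_left _ (self_mem_ball ..)
  have hBc : #B ≤ #Bᶜ := by
    have hunion := card_union_le (ball G x (g - 2)) (ball G y (g - 2))
    rw [← hB] at hunion
    have := card_add_card_compl B
    omega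
  have hfar : ∀ w ∉ B, Far g G x w ∧ Far g G y w := by
    intro w hw
    rw [hB, mem_union, not_or] at hw
    exact ⟨far_of_notMem_ball hw.1, far_of_notMem_ball hw.2⟩
  have hW : ∀ w ∉ B, #(nbr G w) = d := by
    intro w hw
    by_contra hne
    have hwd := lt_of_le_of_ne (hdeg w) hne
    have hfw := (hfar w hw).1
    have hxw : x ≠ w := by
      rintro rfl
      exact hw hxB
    have hadj : ¬ G.Adj x w := by
      intro hadj
      have := hfw (Walk.cons hadj Walk.nil)
      simp at this
      omega
    have hnew := card_nbr_sup_edge hxw hadj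
    have hle := hmax (G ⊔ edge x w) ⟨fun v => by
      have := hdeg v
      rw [hnew]
      grind, hgirth.sup_edge hfw⟩
    refine absurd hle (not_le.2 (sum_lt_sum (fun v _ => ?_) ⟨x, mem_univ x, ?_⟩))
    · rw [hnew]
      omega
    · rw [hnew, if_pos rfl]
      omega
  obtain ⟨u, v, hu, hv, huv⟩ := exists_adj_of_card_le hdeg hxB hx hBc hW
  obtain ⟨H, hH, hHdeg⟩ := exists_switch hg hgirth huv (hfar u hu).1 (hfar v hv).1 (hfar u hu).2
    (hfar v hv).2
  have hle := hmax H ⟨fun w => by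
    obtain ⟨p, q, hw, hp1, hp0, hq1, hq0⟩ := hHdeg w
    have := hdeg w
    by_cases hwx : w = x <;> by_cases hwy : w = y
    · subst hwx
      have := hxy hwy.symm
      have := hp1 rfl
      have := hq1 hwy
      omega
    · subst hwx
      have := hp1 rfl
      have := hq0 hwy
      omega
    · subst hwy
      have := hp0 hwx
      have := hq1 rfl
      omega
    · have := hp0 hwx
      have := hq0 hwy
      omega, hH⟩
  refine absurd hle (not_le.2 (sum_lt_sum (fun w _ => ?_) ⟨x, mem_univ x, ?_⟩))
  · obtain ⟨p, q, hw, -⟩ := hHdeg w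
    omega
  · obtain ⟨p, q, hw, hp1, -⟩ := hHdeg x
    have := hp1 rfl
    omega

end Degrees

end ErdosSachs

/-- **Erdős–Sachs theorem.** For all `d ≥ 2` and `g ≥ 3` there is a `d`-regular graph with
girth at least `g` on at most `4·∑_{i=0}^{g-2}(d-1)^i` vertices. -/
theorem erdos_sachs (d g : ℕ) (hd : 2 ≤ d) (hg : 3 ≤ g) :
    ∃ (V : Type) (_ : Fintype V) (G : SimpleGraph V) (_ : DecidableRel G.Adj),
      G.IsRegularOfDegree d ∧
      (g : ℕ∞) ≤ G.egirth ∧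
      Fintype.card V ≤ 4 * ∑ i ∈ Finset.range (g - 1), (d - 1) ^ i := by
  classical
  obtain ⟨G, hreg, hgirth⟩ := ErdosSachs.exists_regular_card_eq
    (V := Fin (4 * ∑ i ∈ Finset.range (g - 1), (d - 1) ^ i)) d g hg (Fintype.card_fin _)
  refine ⟨_, inferInstance, G, inferInstance, fun v => ?_, hgirth.le_egirth, by simp⟩
  rw [ErdosSachs.degree_eq_card_nbr, hreg v]
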